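/- arXiv:1212.6085 — 10 statements merged into one kernel-verified Lean document; each statement's English description precedes it below -/
import Mathlib

section
/- Let n ≥ 1 and let A = (a_{ij}) be an n×n matrix with entries in ℝ ∪ {−∞}. Suppose λ ∈ ℝ, u ∈ ℝⁿ is a max-plus eigenvector of A with eigenvalue λ (for every i, max_{1≤j≤n} (a_{ij} + u_j) = λ + u_i), and v ∈ ℝⁿ is a max-plus eigenvector of Aᵀ with the same eigenvalue λ (for every i, max_{1≤j≤n} (a_{ji} + v_j) = λ + v_i). Then for every real α with 0 ≤ α ≤ 1, the vector x with entries x_i = α·u_i + (α − 1)·v_i satisfies max_{1≤i,j≤n} (a_{ij} + x_j − x_i) = λ. -/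
/-- The max-plus "Rayleigh quotient": `max_{i,j} (a_{ij} + x_j - x_i)`,
with entries in `ℝ ∪ {-∞}` modeled as `WithBot ℝ`. -/
noncomputable def maxPlusRayleigh {n : ℕ} [NeZero n] (A : Fin n → Fin n → WithBot ℝ)
    (x : Fin n → ℝ) : WithBot ℝ :=
  Finset.univ.sup' Finset.univ_nonempty
    (fun p : Fin n × Fin n => A p.1 p.2 + ((x p.2 - x p.1 : ℝ) : WithBot ℝ))

/-- `(lam, u)` is a max-plus eigenpair of `A`: for every `i`,
`max_j (a_{ij} + u_j) = lam + u_i`. -/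
def IsMaxPlusEigenpair {n : ℕ} [NeZero n] (A : Fin n → Fin n → WithBot ℝ)
    (lam : ℝ) (u : Fin n → ℝ) : Prop :=
  ∀ i, Finset.univ.sup' Finset.univ_nonempty
    (fun j => A i j + ((u j : ℝ) : WithBot ℝ)) = ((lam + u i : ℝ) : WithBot ℝ)

theorem stmt3 (n : ℕ) [NeZero n] (A : Fin n → Fin n → WithBot ℝ)
    (lam : ℝ) (u v : Fin n → ℝ)
    (hu : IsMaxPlusEigenpair A lam u)
    (hv : IsMaxPlusEigenpair (fun i j => A j i) lam v)
    (α : ℝ) (hα0 : 0 ≤ α) (hα1 : α ≤ 1) :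
    maxPlusRayleigh A (fun i => α * u i + (α - 1) * v i) = ((lam : ℝ) : WithBot ℝ) := by
  have key1 : ∀ i j (a : ℝ), A i j = (a : WithBot ℝ) → a + u j ≤ lam + u i := by
    intro i j a ha
    have h := Finset.le_sup' (fun j => A i j + ((u j : ℝ) : WithBot ℝ)) (Finset.mem_univ j)
    rw [hu i] at h
    simp only [ha] at h
    exact_mod_cast h
  have key2 : ∀ i j (a : ℝ), A i j = (a : WithBot ℝ) → a + v i ≤ lam + v j := by
    intro i j a ha
    have h := Finset.le_sup' (fun k => A k j + ((v k : ℝ) : WithBot ℝ)) (Finset.mem_univ i)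
    rw [hv j] at h
    simp only [ha] at h
    exact_mod_cast h
  unfold maxPlusRayleigh
  apply le_antisymm
  · apply Finset.sup'_le
    rintro ⟨i, j⟩ -
    rcases hA : A i j with _ | a
    · simp only [hA]
      exact bot_le
    · have h1 := key1 i j a hA
      have h2 := key2 i j a hA
      simp only [hA]
      have : a + ((α * u j + (α - 1) * v j) - (α * u i + (α - 1) * v i)) ≤ lam := by
        nlinarith [mul_le_mul_of_nonneg_left h1 hα0,
          mul_le_mul_of_nonneg_left h2 (sub_nonneg.2 hα1)]
      exact WithBot.coe_le_coe.2 this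
  · -- pick the index maximizing `u - x`
    obtain ⟨i, -, hi⟩ := Finset.exists_max_image Finset.univ
      (fun i => u i - (α * u i + (α - 1) * v i)) Finset.univ_nonempty
    obtain ⟨j, -, hj⟩ := Finset.exists_mem_eq_sup' Finset.univ_nonempty
      (fun j => A i j + ((u j : ℝ) : WithBot ℝ))
    rw [hu i] at hj
    have hij := hi j (Finset.mem_univ j)
    refine le_trans ?_ (Finset.le_sup' _ (Finset.mem_univ (i, j)))
    rcases hA : A i j with _ | a
    · simp only [hA] at hj
      exact absurd hj WithBot.coe_ne_bot
    · simp only [hA] at hj ⊢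
      have hj' : lam + u i = a + u j := WithBot.coe_injective hj
      have : lam ≤ a + ((α * u j + (α - 1) * v j) - (α * u i + (α - 1) * v i)) := by
        linarith
      exact WithBot.coe_le_coe.2 this
end

section
/- Let n ≥ 1 and let A = (a_{ij}) be an n×n matrix with entries in ℝ ∪ {−∞}. Suppose λ ∈ ℝ and there exist u ∈ ℝⁿ with max_{1≤j≤n} (a_{ij} + u_j) = λ + u_i for every i. Then λ is the least element of the set { max_{1≤i,j≤n} (a_{ij} + x_j − x_i) : x ∈ ℝⁿ }; that is, min_{x ∈ ℝⁿ} max_{1≤i,j≤n} (a_{ij} + x_j − x_i) = λ and the minimum is attained. -/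
theorem stmt4 (n : ℕ) [NeZero n] (A : Fin n → Fin n → WithBot ℝ)
    (lam : ℝ) (u : Fin n → ℝ) (h : IsMaxPlusEigenpair A lam u) :
    IsLeast {y : WithBot ℝ | ∃ x : Fin n → ℝ, maxPlusRayleigh A x = y}
      ((lam : ℝ) : WithBot ℝ) := by
  have lower : ∀ x : Fin n → ℝ, ((lam : ℝ) : WithBot ℝ) ≤ maxPlusRayleigh A x := by
    intro x
    obtain ⟨i, hi⟩ := Finite.exists_min (fun i => x i - u i)
    obtain ⟨j, -, hj⟩ := Finset.exists_mem_eq_sup' (Finset.univ_nonempty (α := Fin n))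
      (fun j => A i j + ((u j : ℝ) : WithBot ℝ))
    rw [h i] at hj
    refine le_trans ?_ (Finset.le_sup' (fun p : Fin n × Fin n =>
      A p.1 p.2 + ((x p.2 - x p.1 : ℝ) : WithBot ℝ)) (Finset.mem_univ (i, j)))
    have hij := hi j
    dsimp only at hj hij ⊢
    generalize A i j = a at hj ⊢
    induction a using WithBot.recBotCoe with
    | bot => simp at hj
    | coe a =>
      rw [← WithBot.coe_add, WithBot.coe_inj] at hj
      rw [← WithBot.coe_add, WithBot.coe_le_coe]
      linarith
  refine ⟨⟨u, le_antisymm ?_ (lower u)⟩, ?_⟩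
  · refine Finset.sup'_le _ _ ?_
    rintro ⟨i, j⟩ -
    have hj := Finset.le_sup' (fun j => A i j + ((u j : ℝ) : WithBot ℝ)) (Finset.mem_univ j)
    rw [h i] at hj
    dsimp only at hj ⊢
    generalize A i j = a at hj ⊢
    induction a using WithBot.recBotCoe with
    | bot => simp
    | coe a =>
      rw [← WithBot.coe_add, WithBot.coe_le_coe] at hj
      rw [← WithBot.coe_add, WithBot.coe_le_coe]
      linarith
  · rintro y ⟨x, rfl⟩
    exact lower x
end

section
/- Let n ≥ 1, m ≥ 1, let r_1, …, r_m ∈ ℝⁿ (with coordinates r_{ij} for i = 1, …, n and j = 1, …, m) and let w_1, …, w_m ∈ ℝ. Define p_i = max_{1≤j≤m} (r_{ij} + w_j) and q_i = min_{1≤j≤m} (r_{ij} − w_j) for each i. Then for every x ∈ ℝⁿ, max_{1≤j≤m} ( w_j + max_{1≤i≤n} |r_{ij} − x_i| ) = max_{1≤i≤n} max( p_i − x_i , x_i − q_i ). -/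
theorem stmt5 (n m : ℕ) [NeZero n] [NeZero m]
    (r : Fin n → Fin m → ℝ) (w : Fin m → ℝ) (p q : Fin n → ℝ)
    (hp : ∀ i, p i = Finset.univ.sup' Finset.univ_nonempty (fun j => r i j + w j))
    (hq : ∀ i, q i = Finset.univ.inf' Finset.univ_nonempty (fun j => r i j - w j))
    (x : Fin n → ℝ) :
    Finset.univ.sup' Finset.univ_nonempty
        (fun j => w j + Finset.univ.sup' Finset.univ_nonempty (fun i => |r i j - x i|))
      = Finset.univ.sup' Finset.univ_nonempty
        (fun i => max (p i - x i) (x i - q i)) := by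
  apply eq_of_forall_ge_iff
  intro c
  have h1 : ∀ j, (w j + Finset.univ.sup' Finset.univ_nonempty (fun i => |r i j - x i|) ≤ c) ↔
      ∀ i, |r i j - x i| ≤ c - w j := by
    intro j
    rw [← le_sub_iff_add_le', Finset.sup'_le_iff]
    simp
  have h2 : ∀ i, (max (p i - x i) (x i - q i) ≤ c) ↔ ∀ j, |r i j - x i| ≤ c - w j := by
    intro i
    rw [max_le_iff, sub_le_iff_le_add, sub_le_comm, hp, hq, Finset.sup'_le_iff,
      Finset.le_inf'_iff]
    constructor
    · rintro ⟨ha, hb⟩ j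
      have h3 := ha j (Finset.mem_univ j)
      have h4 := hb j (Finset.mem_univ j)
      rw [abs_le]
      constructor <;> linarith
    · intro h
      constructor
      · intro j _
        have h3 := abs_le.mp (h j)
        linarith [h3.2]
      · intro j _
        have h3 := abs_le.mp (h j)
        linarith [h3.1]
  rw [Finset.sup'_le_iff, Finset.sup'_le_iff]
  simp only [h1, h2, Finset.mem_univ, true_implies]
  exact forall_comm
end

section
/- Let n ≥ 1 and let p, q ∈ ℝⁿ. Set λ = (1/2)·max_{1≤i≤n} (p_i − q_i). Then for every real α with 0 ≤ α ≤ 1, the vector x with entries x_i = α·(p_i − λ) + (1 − α)·(q_i + λ) satisfies max_{1≤i≤n} max( p_i − x_i , x_i − q_i ) = λ. -/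
theorem stmt7 (n : ℕ) [NeZero n] (p q : Fin n → ℝ) (lam : ℝ)
    (hlam : lam = (1 / 2) * Finset.univ.sup' Finset.univ_nonempty (fun i => p i - q i))
    (α : ℝ) (hα0 : 0 ≤ α) (hα1 : α ≤ 1)
    (x : Fin n → ℝ) (hx : ∀ i, x i = α * (p i - lam) + (1 - α) * (q i + lam)) :
    Finset.univ.sup' Finset.univ_nonempty
      (fun i => max (p i - x i) (x i - q i)) = lam := by
  have hle : ∀ i, p i - q i ≤ 2 * lam := by
    intro i
    have h := Finset.le_sup' (fun i => p i - q i) (Finset.mem_univ i)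
    linarith
  obtain ⟨j, -, hj⟩ := Finset.exists_mem_eq_sup' (Finset.univ_nonempty (α := Fin n))
    (fun i => p i - q i)
  have hj2 : p j - q j = 2 * lam := by
    rw [hlam, hj]; ring
  apply le_antisymm
  · apply Finset.sup'_le
    intro i _
    have h := hle i
    rw [hx i]
    apply max_le
    · nlinarith [mul_nonneg (sub_nonneg.2 hα1) (sub_nonneg.2 h)]
    · nlinarith [mul_nonneg hα0 (sub_nonneg.2 h)]
  · have h := Finset.le_sup' (fun i => max (p i - x i) (x i - q i)) (Finset.mem_univ j)
    refine le_trans (le_trans ?_ (le_max_left _ _)) h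
    have hp : p j = q j + 2 * lam := by linarith
    rw [hx j, hp]
    apply le_of_eq
    ring
end

section
/- Let n ≥ 1 and let p, q ∈ ℝⁿ. Set λ = (1/2)·max_{1≤i≤n} (p_i − q_i). Then λ is the least element of the set { max_{1≤i≤n} max(p_i − x_i, x_i − q_i) : x ∈ ℝⁿ }; that is, min_{x ∈ ℝⁿ} max_{1≤i≤n} max(p_i − x_i, x_i − q_i) = λ and the minimum is attained. -/
theorem stmt8 (n : ℕ) [NeZero n] (p q : Fin n → ℝ) (lam : ℝ)
    (hlam : lam = (1 / 2) * Finset.univ.sup' Finset.univ_nonempty (fun i => p i - q i)) :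
    IsLeast {y : ℝ | ∃ x : Fin n → ℝ,
      Finset.univ.sup' Finset.univ_nonempty (fun i => max (p i - x i) (x i - q i)) = y}
      lam := by
  have lower : ∀ x : Fin n → ℝ, lam ≤
      Finset.univ.sup' Finset.univ_nonempty (fun i => max (p i - x i) (x i - q i)) := by
    intro x
    have h : Finset.univ.sup' Finset.univ_nonempty (fun i => p i - q i) ≤
        2 * Finset.univ.sup' Finset.univ_nonempty
          (fun i => max (p i - x i) (x i - q i)) := by
      apply Finset.sup'_le
      intro i hi
      have h1 := Finset.le_sup' (fun i => max (p i - x i) (x i - q i)) hi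
      have h2 := le_max_left (p i - x i) (x i - q i)
      have h3 := le_max_right (p i - x i) (x i - q i)
      linarith
    linarith
  constructor
  · refine ⟨fun i => (p i + q i) / 2, le_antisymm ?_ (lower _)⟩
    apply Finset.sup'_le
    intro i hi
    have h1 := Finset.le_sup' (fun i => p i - q i) hi
    apply max_le <;> linarith
  · rintro y ⟨x, rfl⟩
    exact lower x
end

section
/- Let n ≥ 1, m ≥ 2, let r_1, …, r_m ∈ ℝⁿ (with coordinates r_{ij} for i = 1, …, n and j = 1, …, m) and let w_1, …, w_m ∈ ℝ. Define p_i = max_{1≤j≤m} (r_{ij} + w_j), q_i = min_{1≤j≤m} (r_{ij} − w_j), and λ = (1/2)·max_{1≤i≤n} (p_i − q_i). Then: (1) for every x ∈ ℝⁿ, max_{1≤j≤m} ( max_{1≤i≤n} |r_{ij} − x_i| + w_j ) ≥ λ; and (2) for every real α with 0 ≤ α ≤ 1, the vector x with entries x_i = α·(p_i − λ) + (1 − α)·(q_i + λ) satisfies max_{1≤j≤m} ( max_{1≤i≤n} |r_{ij} − x_i| + w_j ) = λ. Hence min_{x ∈ ℝⁿ} max_{1≤j≤m} ( max_{1≤i≤n}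 |r_{ij} − x_i| + w_j ) = λ. -/
theorem stmt9 (n m : ℕ) [NeZero n] [NeZero m] (hm : 2 ≤ m)
    (r : Fin n → Fin m → ℝ) (w : Fin m → ℝ) (p q : Fin n → ℝ) (lam : ℝ)
    (hp : ∀ i, p i = Finset.univ.sup' Finset.univ_nonempty (fun j => r i j + w j))
    (hq : ∀ i, q i = Finset.univ.inf' Finset.univ_nonempty (fun j => r i j - w j))
    (hlam : lam = (1 / 2) * Finset.univ.sup' Finset.univ_nonempty (fun i => p i - q i)) :
    (∀ x : Fin n → ℝ,
      lam ≤ Finset.univ.sup' Finset.univ_nonempty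
        (fun j => Finset.univ.sup' Finset.univ_nonempty (fun i => |r i j - x i|) + w j)) ∧
    (∀ α : ℝ, 0 ≤ α → α ≤ 1 → ∀ x : Fin n → ℝ,
      (∀ i, x i = α * (p i - lam) + (1 - α) * (q i + lam)) →
      Finset.univ.sup' Finset.univ_nonempty
        (fun j => Finset.univ.sup' Finset.univ_nonempty (fun i => |r i j - x i|) + w j) = lam) ∧
    IsLeast {y : ℝ | ∃ x : Fin n → ℝ,
      Finset.univ.sup' Finset.univ_nonempty
        (fun j => Finset.univ.sup' Finset.univ_nonempty (fun i => |r i j - x i|) + w j) = y}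
      lam := by
  have h1 : ∀ x : Fin n → ℝ,
      lam ≤ Finset.univ.sup' Finset.univ_nonempty
        (fun j => Finset.univ.sup' Finset.univ_nonempty (fun i => |r i j - x i|) + w j) := by
    intro x
    set F := Finset.univ.sup' Finset.univ_nonempty
        (fun j => Finset.univ.sup' Finset.univ_nonempty (fun i => |r i j - x i|) + w j) with hF
    have key : ∀ i j, |r i j - x i| + w j ≤ F := by
      intro i j
      have a := Finset.le_sup' (fun i => |r i j - x i|) (Finset.mem_univ i)
      have b := Finset.le_sup'
        (fun j => Finset.univ.sup' Finset.univ_nonempty (fun i => |r i j - x i|) + w j)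
        (Finset.mem_univ j)
      linarith
    have h : Finset.univ.sup' Finset.univ_nonempty (fun i => p i - q i) ≤ 2 * F := by
      apply Finset.sup'_le
      intro i _
      have hpi : p i ≤ F + x i := by
        rw [hp]
        apply Finset.sup'_le
        intro j _
        have := key i j
        have := le_abs_self (r i j - x i)
        linarith
      have hqi : x i - F ≤ q i := by
        rw [hq]
        apply Finset.le_inf'
        intro j _
        have := key i j
        have := neg_abs_le (r i j - x i)
        linarith
      linarith
    linarith
  have h2 : ∀ α : ℝ, 0 ≤ α → α ≤ 1 → ∀ x : Fin n → ℝ,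
      (∀ i, x i = α * (p i - lam) + (1 - α) * (q i + lam)) →
      Finset.univ.sup' Finset.univ_nonempty
        (fun j => Finset.univ.sup' Finset.univ_nonempty (fun i => |r i j - x i|) + w j) = lam := by
    intro α h0 h1' x hx
    apply le_antisymm _ (h1 x)
    apply Finset.sup'_le
    intro j _
    rw [← le_sub_iff_add_le]
    apply Finset.sup'_le
    intro i _
    have a := Finset.le_sup' (fun i => p i - q i) (Finset.mem_univ i)
    have b := Finset.le_sup' (fun j => r i j + w j) (Finset.mem_univ j)
    have c := Finset.inf'_le (fun j => r i j - w j) (Finset.mem_univ j)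
    rw [← hp] at b
    rw [← hq] at c
    have d : 0 ≤ q i + lam - (p i - lam) := by linarith
    have e := mul_nonneg h0 d
    have f := mul_nonneg (sub_nonneg.2 h1') d
    have hxi := hx i
    rw [abs_le]
    constructor <;> nlinarith
  refine ⟨h1, h2, ⟨_, h2 0 le_rfl zero_le_one _ (fun i => rfl)⟩, ?_⟩
  rintro y ⟨x, rfl⟩
  exact h1 x
end

section
/- Let n ≥ 1 and let p, q ∈ ℝⁿ. Set λ = (1/2)·max_{1≤i≤n} (p_i − q_i). Define the vector u ∈ ℝ^{n+1} by u_0 = 0 and u_i = p_i − λ for i = 1, …, n. Then u is a max-plus eigenvector with eigenvalue λ of the (n+1)×(n+1) block matrix A over ℝ ∪ {−∞} whose (0, i) entry is −q_i, whose (i, 0) entry is p_i (for i = 1, …, n), and whose all other entries are −∞; concretely: max_{1≤i≤n} (−q_i + u_i) = λ + u_0, and p_i + u_0 = λ + u_i for every i = 1, …, n. -/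
theorem stmt10 (n : ℕ) [NeZero n] (p q : Fin n → ℝ) (lam : ℝ)
    (hlam : lam = (1 / 2) * Finset.univ.sup' Finset.univ_nonempty (fun i => p i - q i))
    (A : Fin (n + 1) → Fin (n + 1) → WithBot ℝ)
    (hA00 : A 0 0 = ⊥)
    (hA0i : ∀ i : Fin n, A 0 i.succ = ((-q i : ℝ) : WithBot ℝ))
    (hAi0 : ∀ i : Fin n, A i.succ 0 = ((p i : ℝ) : WithBot ℝ))
    (hAij : ∀ i j : Fin n, A i.succ j.succ = ⊥)
    (u : Fin (n + 1) → ℝ)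
    (hu0 : u 0 = 0)
    (hui : ∀ i : Fin n, u i.succ = p i - lam) :
    -- `u` is a max-plus eigenvector of `A` with eigenvalue `lam`:
    (∀ k, Finset.univ.sup' Finset.univ_nonempty
        (fun l => A k l + ((u l : ℝ) : WithBot ℝ)) = ((lam + u k : ℝ) : WithBot ℝ)) ∧
    -- concretely:
    Finset.univ.sup' Finset.univ_nonempty (fun i : Fin n => -q i + u i.succ) = lam + u 0 ∧
    (∀ i : Fin n, p i + u 0 = lam + u i.succ) := by
  have hle : ∀ i, p i - q i ≤ 2 * lam := by
    intro i
    have := Finset.le_sup' (fun i => p i - q i) (Finset.mem_univ i)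
    linarith
  obtain ⟨m, -, hm⟩ := Finset.exists_mem_eq_sup' (Finset.univ_nonempty (α := Fin n))
    (fun i => p i - q i)
  have hm2 : p m - q m = 2 * lam := by
    rw [hlam, hm]; ring
  refine ⟨?_, ?_, ?_⟩
  · intro k
    refine Fin.cases ?_ (fun i => ?_) k
    · apply le_antisymm
      · refine Finset.sup'_le _ _ (fun l _ => ?_)
        refine Fin.cases ?_ (fun j => ?_) l
        · rw [hA00, WithBot.bot_add]; exact bot_le
        · rw [hA0i, hui, hu0, ← WithBot.coe_add, WithBot.coe_le_coe]
          linarith [hle j]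
      · refine le_trans ?_ (Finset.le_sup' _ (Finset.mem_univ m.succ))
        rw [hA0i, hui, hu0, ← WithBot.coe_add, WithBot.coe_le_coe]
        linarith
    · apply le_antisymm
      · refine Finset.sup'_le _ _ (fun l _ => ?_)
        refine Fin.cases ?_ (fun j => ?_) l
        · rw [hAi0, hui, hu0, ← WithBot.coe_add, WithBot.coe_le_coe]
          linarith
        · rw [hAij, WithBot.bot_add]; exact bot_le
      · refine le_trans ?_ (Finset.le_sup' _ (Finset.mem_univ 0))
        rw [hAi0, hui, hu0, ← WithBot.coe_add, WithBot.coe_le_coe]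
        linarith
  · apply le_antisymm
    · refine Finset.sup'_le _ _ (fun j _ => ?_)
      rw [hui, hu0]
      linarith [hle j]
    · refine le_trans ?_ (Finset.le_sup' _ (Finset.mem_univ m))
      rw [hui, hu0]
      linarith
  · intro i
    rw [hui, hu0]; ring
end

section
/- Let n ≥ 1 and let p, q ∈ ℝⁿ. Set λ = (1/2)·max_{1≤i≤n} (p_i − q_i). Define the vector v ∈ ℝ^{n+1} by v_0 = 0 and v_i = −q_i − λ for i = 1, …, n. Then v is a max-plus eigenvector with eigenvalue λ of the transpose of the (n+1)×(n+1) block matrix A over ℝ ∪ {−∞} whose (0, i) entry is −q_i, whose (i, 0) entry is p_i (for i = 1, …, n), and whose all other entries are −∞; concretely: max_{1≤i≤n} (p_i + v_i) = λ + v_0, and −q_i + v_0 = λ + v_i for every i = 1, …, n. -/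
theorem stmt11 (n : ℕ) [NeZero n] (p q : Fin n → ℝ) (lam : ℝ)
    (hlam : lam = (1 / 2) * Finset.univ.sup' Finset.univ_nonempty (fun i => p i - q i))
    (A : Fin (n + 1) → Fin (n + 1) → WithBot ℝ)
    (hA00 : A 0 0 = ⊥)
    (hA0i : ∀ i : Fin n, A 0 i.succ = ((-q i : ℝ) : WithBot ℝ))
    (hAi0 : ∀ i : Fin n, A i.succ 0 = ((p i : ℝ) : WithBot ℝ))
    (hAij : ∀ i j : Fin n, A i.succ j.succ = ⊥)
    (v : Fin (n + 1) → ℝ)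
    (hv0 : v 0 = 0)
    (hvi : ∀ i : Fin n, v i.succ = -q i - lam) :
    -- `v` is a max-plus eigenvector of the transpose of `A` with eigenvalue `lam`:
    (∀ k, Finset.univ.sup' Finset.univ_nonempty
        (fun l => A l k + ((v l : ℝ) : WithBot ℝ)) = ((lam + v k : ℝ) : WithBot ℝ)) ∧
    -- concretely:
    Finset.univ.sup' Finset.univ_nonempty (fun i : Fin n => p i + v i.succ) = lam + v 0 ∧
    (∀ i : Fin n, -q i + v 0 = lam + v i.succ) := by
  have hle : ∀ i, p i - q i ≤ 2 * lam := by
    intro i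
    have := Finset.le_sup' (fun i => p i - q i) (Finset.mem_univ i)
    linarith
  obtain ⟨j, -, hj⟩ := Finset.exists_mem_eq_sup' (Finset.univ_nonempty (α := Fin n))
    (fun i => p i - q i)
  have hj' : p j - q j = 2 * lam := by
    linarith
  refine ⟨?_, ?_, ?_⟩
  · intro k
    refine Fin.cases ?_ (fun i => ?_) k
    · apply le_antisymm
      · refine Finset.sup'_le _ _ (fun l _ => ?_)
        refine Fin.cases ?_ (fun i => ?_) l
        · simp [hA00]
        · rw [hAi0, ← WithBot.coe_add, WithBot.coe_le_coe, hvi, hv0]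
          linarith [hle i]
      · refine le_trans ?_ (Finset.le_sup' _ (Finset.mem_univ j.succ))
        rw [hAi0, ← WithBot.coe_add, WithBot.coe_le_coe, hvi, hv0]
        linarith
    · apply le_antisymm
      · refine Finset.sup'_le _ _ (fun l _ => ?_)
        refine Fin.cases ?_ (fun m => ?_) l
        · rw [hA0i, ← WithBot.coe_add, WithBot.coe_le_coe, hvi, hv0]
          linarith
        · simp [hAij]
      · refine le_trans ?_ (Finset.le_sup' _ (Finset.mem_univ 0))
        rw [hA0i, ← WithBot.coe_add, WithBot.coe_le_coe, hvi, hv0]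
        linarith
  · apply le_antisymm
    · refine Finset.sup'_le _ _ (fun i _ => ?_)
      rw [hvi, hv0]
      linarith [hle i]
    · refine le_trans ?_ (Finset.le_sup' _ (Finset.mem_univ j))
      rw [hvi, hv0]
      linarith
  · intro i
    rw [hvi, hv0]
    ring
end

section
/- Let n ≥ 1 and let p, q ∈ ℝⁿ. Consider the (n+1)×(n+1) matrix A over ℝ ∪ {−∞} whose (0, i) entry is −q_i, whose (i, 0) entry is p_i (for i = 1, …, n), and whose all other entries are −∞, with matrix powers taken in the max-plus sense (matrix product (B·C)_{kl} = max_s (b_{ks} + c_{sl}), additive identities being −∞). Then for every integer k ≥ 1, the max-plus trace of the odd power A^{2k−1} (i.e. the maximum of its diagonal entries) equals −∞, and the max-plus trace of the even power A^{2k} equals k · max_{1≤i≤n} (p_i − q_i). -/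
/-- Max-plus matrix multiplication over `ℝ ∪ {-∞}`:
`(B ⬝ C)_{k l} = max_s (b_{k s} + c_{s l})`. -/
noncomputable def mpMul {k : ℕ} [NeZero k] (B C : Fin k → Fin k → WithBot ℝ) :
    Fin k → Fin k → WithBot ℝ :=
  fun i j => Finset.univ.sup' Finset.univ_nonempty (fun s => B i s + C s j)

/-- Max-plus matrix power; the 0th power is the max-plus identity matrix
(`0` on the diagonal, `-∞` elsewhere), so that `mpPow B 1 = B`. -/
noncomputable def mpPow {k : ℕ} [NeZero k] (B : Fin k → Fin k → WithBot ℝ) :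
    ℕ → (Fin k → Fin k → WithBot ℝ)
  | 0 => fun i j => if i = j then ((0 : ℝ) : WithBot ℝ) else ⊥
  | m + 1 => mpMul B (mpPow B m)

/-- Max-plus trace: the maximum of the diagonal entries. -/
noncomputable def mpTr {k : ℕ} [NeZero k] (B : Fin k → Fin k → WithBot ℝ) : WithBot ℝ :=
  Finset.univ.sup' Finset.univ_nonempty (fun i => B i i)

theorem stmt12 (n : ℕ) [NeZero n] (p q : Fin n → ℝ)
    (A : Fin (n + 1) → Fin (n + 1) → WithBot ℝ)
    (hA00 : A 0 0 = ⊥)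
    (hA0i : ∀ i : Fin n, A 0 i.succ = ((-q i : ℝ) : WithBot ℝ))
    (hAi0 : ∀ i : Fin n, A i.succ 0 = ((p i : ℝ) : WithBot ℝ))
    (hAij : ∀ i j : Fin n, A i.succ j.succ = ⊥)
    (k : ℕ) (hk : 1 ≤ k) :
    mpTr (mpPow A (2 * k - 1)) = ⊥ ∧
    mpTr (mpPow A (2 * k)) =
      (((k : ℝ) * Finset.univ.sup' Finset.univ_nonempty (fun i => p i - q i) : ℝ) :
        WithBot ℝ) := by
  set M : ℝ := Finset.univ.sup' Finset.univ_nonempty (fun i => p i - q i) with hM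
  have hle : ∀ i, p i - q i ≤ M := fun i =>
    Finset.le_sup' (fun i => p i - q i) (Finset.mem_univ i)
  obtain ⟨i0, -, hi0⟩ := Finset.exists_mem_eq_sup' (Finset.univ_nonempty (α := Fin n))
    (fun i => p i - q i)
  have hi0' : M = p i0 - q i0 := hi0
  have stepS : ∀ m i j, mpPow A (m + 1) (Fin.succ i) j = (p i : WithBot ℝ) + mpPow A m 0 j := by
    intro m i j
    simp only [mpPow, mpMul]
    apply le_antisymm
    · refine Finset.sup'_le _ _ fun s _ => ?_
      refine Fin.cases ?_ (fun t => ?_) s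
      · rw [hAi0]
      · rw [hAij, WithBot.bot_add]; exact bot_le
    · rw [← hAi0]
      exact Finset.le_sup' (fun s => A i.succ s + mpPow A m s j) (Finset.mem_univ 0)
  have step0 : ∀ m j, mpPow A (m + 2) 0 j = (M : WithBot ℝ) + mpPow A m 0 j := by
    intro m j
    change mpMul A (mpPow A (m + 1)) 0 j = _
    simp only [mpMul]
    have key : ∀ i : Fin n, A 0 i.succ + mpPow A (m + 1) i.succ j
        = ((p i - q i : ℝ) : WithBot ℝ) + mpPow A m 0 j := by
      intro i
      rw [stepS, hA0i, ← add_assoc, ← WithBot.coe_add]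
      congr 2
      ring
    apply le_antisymm
    · refine Finset.sup'_le _ _ fun s _ => ?_
      refine Fin.cases ?_ (fun t => ?_) s
      · rw [hA00, WithBot.bot_add]; exact bot_le
      · rw [key]
        exact add_le_add_left (WithBot.coe_le_coe.2 (hle t)) _
    · rw [hi0', ← key]
      exact Finset.le_sup' (fun s => A 0 s + mpPow A (m + 1) s j) (Finset.mem_univ i0.succ)
  have one : ∀ j, mpPow A 1 0 j = A 0 j := by
    intro j
    simp only [mpPow, mpMul]
    apply le_antisymm
    · refine Finset.sup'_le _ _ fun s _ => ?_
      by_cases h : s = j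
      · simp [h]
      · simp [h]
    · rw [Finset.le_sup'_iff]
      exact ⟨j, Finset.mem_univ j, by simp⟩
  have ev : ∀ m j, mpPow A (2 * m) 0 j = ((m * M : ℝ) : WithBot ℝ) + mpPow A 0 0 j := by
    intro m j
    induction m with
    | zero => simp
    | succ m ih =>
      rw [show 2 * (m + 1) = 2 * m + 2 by ring, step0, ih, ← add_assoc, ← WithBot.coe_add]
      congr 2
      push_cast
      ring
  have od : ∀ m j, mpPow A (2 * m + 1) 0 j = ((m * M : ℝ) : WithBot ℝ) + A 0 j := by
    intro m j
    induction m with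
    | zero => simp [one]
    | succ m ih =>
      rw [show 2 * (m + 1) + 1 = 2 * m + 1 + 2 by ring, step0, ih, ← add_assoc, ← WithBot.coe_add]
      congr 2
      push_cast
      ring
  obtain ⟨m, rfl⟩ : ∃ m, k = m + 1 := ⟨k - 1, by omega⟩
  constructor
  · rw [show 2 * (m + 1) - 1 = 2 * m + 1 by omega]
    refine le_bot_iff.1 (Finset.sup'_le _ _ fun s _ => ?_)
    refine Fin.cases ?_ (fun t => ?_) s
    · rw [od, hA00, WithBot.add_bot]
    · rw [stepS, ev]
      simp [mpPow, (Fin.succ_ne_zero t).symm]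
  · have h00 : mpPow A (2 * (m + 1)) 0 0 = ((((m + 1 : ℕ) : ℝ) * M : ℝ) : WithBot ℝ) := by
      rw [ev]
      simp [mpPow]
    apply le_antisymm
    · refine Finset.sup'_le _ _ fun s _ => ?_
      refine Fin.cases ?_ (fun t => ?_) s
      · rw [h00]
      · rw [show 2 * (m + 1) = 2 * m + 1 + 1 by ring, stepS, od, hA0i, ← WithBot.coe_add,
          ← WithBot.coe_add, WithBot.coe_le_coe]
        have := hle t
        push_cast
        linarith
    · rw [← h00]
      exact Finset.le_sup' (fun i => mpPow A (2 * (m + 1)) i i) (Finset.mem_univ 0)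
end

section
/- Let n ≥ 1, m ≥ 2, let r_1, …, r_m ∈ ℝⁿ (with coordinates r_{ij}), let w_1, …, w_m ∈ ℝ and d_1, …, d_m ∈ ℝ. Define p⁰_i = max_{1≤j≤m} (r_{ij} + w_j), q⁰_i = min_{1≤j≤m} (r_{ij} − w_j), λ₀ = (1/2)·max_{1≤i≤n} (p⁰_i − q⁰_i), φ₀(x) = max_{1≤i≤n} max( p⁰_i − x_i , x_i − q⁰_i ) − λ₀, and p¹_i = max_{1≤j≤m} (r_{ij} − d_j), q¹_i = min_{1≤j≤m} (r_{ij} + d_j), φ₁(x) = max_{1≤i≤n} max( p¹_i − x_i , x_i − q¹_i ). Then for every x ∈ ℝⁿ, max( φ₀(x), φ₁(x) ) ≤ 0 if and only if x minimizes the unconstrained objective, i.e. max_{1≤j≤m} ( max_{1≤i≤n} |r_{ij} − x_i| + w_j ) = λ₀, and x is feasible, i.e. max_{1≤i≤n} |r_{ij} − x_i| ≤ d_j for every j = 1, …, m. -/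
theorem stmt14 (n m : ℕ) [NeZero n] [NeZero m] (hm : 2 ≤ m)
    (r : Fin n → Fin m → ℝ) (w d : Fin m → ℝ)
    (p0 q0 p1 q1 : Fin n → ℝ) (lam0 : ℝ) (φ0 φ1 : (Fin n → ℝ) → ℝ)
    (hp0 : ∀ i, p0 i = Finset.univ.sup' Finset.univ_nonempty (fun j => r i j + w j))
    (hq0 : ∀ i, q0 i = Finset.univ.inf' Finset.univ_nonempty (fun j => r i j - w j))
    (hlam0 : lam0 = (1 / 2) * Finset.univ.sup' Finset.univ_nonempty (fun i => p0 i - q0 i))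
    (hφ0 : ∀ x, φ0 x =
      Finset.univ.sup' Finset.univ_nonempty (fun i => max (p0 i - x i) (x i - q0 i)) - lam0)
    (hp1 : ∀ i, p1 i = Finset.univ.sup' Finset.univ_nonempty (fun j => r i j - d j))
    (hq1 : ∀ i, q1 i = Finset.univ.inf' Finset.univ_nonempty (fun j => r i j + d j))
    (hφ1 : ∀ x, φ1 x =
      Finset.univ.sup' Finset.univ_nonempty (fun i => max (p1 i - x i) (x i - q1 i)))
    (x : Fin n → ℝ) :
    max (φ0 x) (φ1 x) ≤ 0 ↔
      (Finset.univ.sup' Finset.univ_nonempty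
          (fun j => Finset.univ.sup' Finset.univ_nonempty (fun i => |r i j - x i|) + w j)
        = lam0 ∧
       ∀ j, Finset.univ.sup' Finset.univ_nonempty (fun i => |r i j - x i|) ≤ d j) := by
  have hA : ∀ c, Finset.univ.sup' Finset.univ_nonempty
      (fun j => Finset.univ.sup' Finset.univ_nonempty (fun i => |r i j - x i|) + w j) ≤ c ↔
      ∀ i, p0 i - x i ≤ c ∧ x i - q0 i ≤ c := by
    intro c
    have e1 : ∀ i, (p0 i - x i ≤ c ↔ ∀ j, r i j + w j ≤ c + x i) := by
      intro i
      rw [hp0, sub_le_iff_le_add, Finset.sup'_le_iff]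
      simp
    have e2 : ∀ i, (x i - q0 i ≤ c ↔ ∀ j, x i - c ≤ r i j - w j) := by
      intro i
      rw [hq0, sub_le_comm, Finset.le_inf'_iff]
      simp
    simp only [e1, e2, Finset.sup'_le_iff, ← le_sub_iff_add_le, Finset.mem_univ, true_imp_iff,
      abs_le]
    constructor
    · intro h i
      exact ⟨fun j => by linarith [(h j i).2], fun j => by linarith [(h j i).1]⟩
    · intro h j i
      constructor
      · linarith [(h i).2 j]
      · linarith [(h i).1 j]
  have hB : φ1 x ≤ 0 ↔
      ∀ j, Finset.univ.sup' Finset.univ_nonempty (fun i => |r i j - x i|) ≤ d j := by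
    simp only [hφ1, hp1, hq1, Finset.sup'_le_iff, Finset.le_inf'_iff, Finset.mem_univ,
      true_imp_iff, abs_le, max_le_iff, sub_nonpos]
    constructor
    · intro h j i
      constructor
      · linarith [(h i).2 j]
      · linarith [(h i).1 j]
    · intro h i
      exact ⟨fun j => by linarith [(h j i).2], fun j => by linarith [(h j i).1]⟩
  have hC : φ0 x ≤ 0 ↔ ∀ i, p0 i - x i ≤ lam0 ∧ x i - q0 i ≤ lam0 := by
    rw [hφ0, sub_nonpos, Finset.sup'_le_iff]
    simp only [Finset.mem_univ, true_imp_iff, max_le_iff]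
  rw [max_le_iff, hB, hC, ← hA]
  refine and_congr_left fun _ => ⟨fun h => le_antisymm h ?_, fun h => h.le⟩
  have h := (hA _).1 le_rfl
  generalize Finset.univ.sup' Finset.univ_nonempty
      (fun j => Finset.univ.sup' Finset.univ_nonempty (fun i => |r i j - x i|) + w j) = F at h ⊢
  have : Finset.univ.sup' Finset.univ_nonempty (fun i => p0 i - q0 i) ≤ 2 * F :=
    Finset.sup'_le _ _ fun i _ => by linarith [(h i).1, (h i).2]
  rw [hlam0]
  linarith
end
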